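/- arXiv:1803.06968 — 2 statements merged into one kernel-verified Lean document; each statement's English description precedes it below -/
import Mathlib

section
/- Let d ≥ 2 and let L_1, …, L_{d−1} be linearly independent linear forms of d−1 variables with real coefficients. Then the series Σ_{n ∈ ℤ^{d−1}, n ≠ 0} 1/(|n| · ∏_{k=1}^{d−1} (|L_k(n)| + 1)) converges. -/
open Real

/-- Euclidean norm of an integer vector. -/
noncomputable def znorm {m : ℕ} (n : Fin m → ℤ) : ℝ := Real.sqrt (∑ i, ((n i : ℝ)) ^ 2)

/-- A product of nonnegative summable functions, one per coordinate, is summable over the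
finite power of the index type. -/
lemma summable_prod_pi {ι β : Type*} [Fintype ι] {g : β → ℝ}
    (hg : ∀ b, 0 ≤ g b) (hs : Summable g) :
    Summable (fun f : ι → β => ∏ k, g (f k)) := by
  classical
  refine summable_of_sum_le (c := ∏ _k : ι, ∑' b, g b)
    (fun f => Finset.prod_nonneg fun k _ => hg _) fun u => ?_
  calc ∑ f ∈ u, ∏ k, g (f k)
      ≤ ∑ f ∈ Fintype.piFinset (fun k => u.image fun f => f k), ∏ k, g (f k) := by
        refine Finset.sum_le_sum_of_subset_of_nonneg (fun f hf => ?_)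
          fun f _ _ => Finset.prod_nonneg fun k _ => hg _
        exact Fintype.mem_piFinset.2 fun k => Finset.mem_image_of_mem (fun f => f k) hf
    _ = ∏ k, ∑ b ∈ u.image (fun f => f k), g b :=
        (Finset.prod_univ_sum _ _).symm
    _ ≤ ∏ _k : ι, ∑' b, g b :=
        Finset.prod_le_prod (fun k _ => Finset.sum_nonneg fun b _ => hg b)
          fun k _ => hs.sum_le_tsum _ fun b _ => hg b

lemma summable_int_one_add_abs_div_two_rpow {p : ℝ} (hp : 1 < p) :
    Summable (fun j : ℤ => ((1 + |(j : ℝ)|) / 2) ^ (-p)) := by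
  have key : Summable (fun n : ℕ => ((1 + (n : ℝ)) / 2) ^ (-p)) := by
    have h := (summable_nat_add_iff 1).2 (Real.summable_nat_rpow.2 (by linarith : -p < -1))
    refine (h.mul_right ((2 : ℝ) ^ (-p))⁻¹).congr fun n => ?_
    rw [Real.div_rpow (by positivity) (by norm_num), div_eq_mul_inv]
    push_cast
    rw [add_comm (n : ℝ) 1]
  rw [summable_int_iff_summable_nat_and_neg]
  constructor <;> simpa using key

/-- Integer points on which linearly independent forms are all less than `1` in absolute value
have uniformly bounded coordinates. -/
lemma exists_bound_of_linear_forms_lt_one {m : ℕ} {L : Fin m → Fin m → ℝ}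
    (hL : LinearIndependent ℝ L) :
    ∃ N : ℕ, 0 < N ∧ ∀ v : Fin m → ℤ, (∀ k, |∑ i, L k i * (v i : ℝ)| < 1) →
      ∀ i, |v i| < N := by
  let A : Matrix (Fin m) (Fin m) ℝ := Matrix.of L
  have hA : IsUnit A := Matrix.linearIndependent_rows_iff_isUnit.1 hL
  obtain ⟨N, hN⟩ := exists_nat_gt (∑ i, ∑ j, |A⁻¹ i j|)
  have hN0 : (0 : ℝ) < N := lt_of_le_of_lt (by positivity) hN
  refine ⟨N, by exact_mod_cast hN0, fun v hv i => ?_⟩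
  let w : Fin m → ℝ := fun i => (v i : ℝ)
  have hw : A⁻¹.mulVec (A.mulVec w) = w := by
    rw [Matrix.mulVec_mulVec, Matrix.nonsing_inv_mul _ ((Matrix.isUnit_iff_isUnit_det A).1 hA),
      Matrix.one_mulVec]
  have hi : (v i : ℝ) = ∑ j, A⁻¹ i j * ∑ l, L j l * (v l : ℝ) := (congrFun hw i).symm
  have hlt : |(v i : ℝ)| < N := by
    calc |(v i : ℝ)| ≤ ∑ j, |A⁻¹ i j * ∑ l, L j l * (v l : ℝ)| := by
          rw [hi]; exact Finset.abs_sum_le_sum_abs _ _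
      _ ≤ ∑ j, |A⁻¹ i j| := by
          refine Finset.sum_le_sum fun j _ => ?_
          rw [abs_mul]
          exact mul_le_of_le_one_right (abs_nonneg _) (hv j).le
      _ ≤ ∑ i, ∑ j, |A⁻¹ i j| :=
          Finset.single_le_sum (f := fun i => ∑ j, |A⁻¹ i j|)
            (fun i _ => by positivity) (Finset.mem_univ i)
      _ < N := hN
  exact_mod_cast hlt

lemma abs_le_znorm {m : ℕ} (n : Fin m → ℤ) (i : Fin m) : |(n i : ℝ)| ≤ znorm n := by
  rw [← Real.sqrt_sq_eq_abs]
  exact Real.sqrt_le_sqrt (Finset.single_le_sum (f := fun i => (n i : ℝ) ^ 2)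
    (fun i _ => sq_nonneg _) (Finset.mem_univ i))

lemma one_le_znorm {m : ℕ} {n : Fin m → ℤ} (hn : n ≠ 0) : 1 ≤ znorm n := by
  obtain ⟨i, hi⟩ := Function.ne_iff.1 hn
  refine le_trans ?_ (abs_le_znorm n i)
  exact_mod_cast Int.one_le_abs hi

lemma abs_linear_form_add_one_le {m : ℕ} (L : Fin m → Fin m → ℝ) {n : Fin m → ℤ} (hn : n ≠ 0)
    (k : Fin m) :
    |∑ i, L k i * (n i : ℝ)| + 1 ≤ (1 + ∑ k, ∑ i, |L k i|) * znorm n := by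
  have h1 := one_le_znorm hn
  have h2 : |∑ i, L k i * (n i : ℝ)| ≤ (∑ i, |L k i|) * znorm n := by
    rw [Finset.sum_mul]
    refine (Finset.abs_sum_le_sum_abs _ _).trans (Finset.sum_le_sum fun i _ => ?_)
    rw [abs_mul]
    exact mul_le_mul_of_nonneg_left (abs_le_znorm n i) (abs_nonneg _)
  have h3 : ∑ i, |L k i| ≤ ∑ k, ∑ i, |L k i| :=
    Finset.single_le_sum (f := fun k => ∑ i, |L k i|) (fun k _ => by positivity)
      (Finset.mem_univ k)
  nlinarith

/-- If every factor is at most `B`, then so is the geometric mean; hence `1 / (z * ∏ a)` is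
controlled by a product of powers with exponent below `-1` whenever `B = C * z`. -/
lemma one_div_mul_prod_le {m : ℕ} (hm : 0 < m) {a : Fin m → ℝ} (ha : ∀ k, 1 ≤ a k) {C z : ℝ}
    (hC : 0 < C) (hz : 0 < z) (hle : ∀ k, a k ≤ C * z) :
    1 / (z * ∏ k, a k) ≤ C * ∏ k, a k ^ (-(1 + 1 / (m : ℝ))) := by
  have hm' : (m : ℝ) ≠ 0 := by exact_mod_cast hm.ne'
  have ha0 : ∀ k, 0 < a k := fun k => one_pos.trans_le (ha k)
  have hP : 0 < ∏ k, a k := Finset.prod_pos fun k _ => ha0 k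
  have hQ : 0 < ∏ k, a k ^ (1 / (m : ℝ)) :=
    Finset.prod_pos fun k _ => Real.rpow_pos_of_pos (ha0 k) _
  have hmean : ∏ k, a k ^ (1 / (m : ℝ)) ≤ C * z := by
    calc ∏ k, a k ^ (1 / (m : ℝ)) ≤ ∏ _k : Fin m, (C * z) ^ (1 / (m : ℝ)) :=
          Finset.prod_le_prod (fun k _ => Real.rpow_nonneg (ha0 k).le _)
            fun k _ => Real.rpow_le_rpow (ha0 k).le (hle k) (by positivity)
      _ = C * z := by
          rw [Finset.prod_const, Finset.card_univ, Fintype.card_fin, ← Real.rpow_natCast,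
            ← Real.rpow_mul (by positivity), one_div_mul_cancel hm', Real.rpow_one]
  have hsplit : ∏ k, a k ^ (-(1 + 1 / (m : ℝ))) =
      1 / ((∏ k, a k ^ (1 / (m : ℝ))) * ∏ k, a k) := by
    rw [← Finset.prod_mul_distrib, one_div (∏ k, _), ← Finset.prod_inv_distrib]
    refine Finset.prod_congr rfl fun k _ => ?_
    rw [Real.rpow_neg (ha0 k).le, add_comm, Real.rpow_add (ha0 k), Real.rpow_one]
  rw [hsplit, mul_one_div, div_le_div_iff₀ (by positivity) (by positivity)]
  nlinarith [mul_le_mul_of_nonneg_right hmean hP.le]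

lemma one_add_abs_floor_div_two_le (x : ℝ) : (1 + |((⌊x⌋ : ℤ) : ℝ)|) / 2 ≤ |x| + 1 := by
  have h1 := Int.floor_le x
  have h2 := Int.lt_floor_add_one x
  have h3 : |((⌊x⌋ : ℤ) : ℝ)| ≤ |x| + 1 :=
    abs_le.2 ⟨by linarith [neg_abs_le x], by linarith [le_abs_self x]⟩
  linarith [abs_nonneg x]

/-- Integer points are determined by the integer parts of the forms together with the residues
of the coordinates modulo a suitable `N`. -/
lemma floor_residue_injective {m N : ℕ} {L : Fin m → Fin m → ℝ}
    (hN : ∀ v : Fin m → ℤ, (∀ k, |∑ i, L k i * (v i : ℝ)| < 1) → ∀ i, |v i| < N) :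
    Function.Injective (fun (n : Fin m → ℤ) (k : Fin m) =>
      ((⌊∑ i, L k i * (n i : ℝ)⌋, (n k : ZMod N)) : ℤ × ZMod N)) := by
  intro n n' h
  have hk := fun k => Prod.ext_iff.1 (congrFun h k)
  have hlt := hN (fun i => n i - n' i) fun k => by
    have := Int.abs_sub_lt_one_of_floor_eq_floor (hk k).1
    simpa [mul_sub, Finset.sum_sub_distrib] using this
  funext i
  have hdvd : (N : ℤ) ∣ n i - n' i :=
    (ZMod.intCast_eq_intCast_iff_dvd_sub _ _ _).1 (hk i).2.symm
  exact sub_eq_zero.1 (Int.eq_zero_of_abs_lt_dvd hdvd (hlt i))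

/-- For linearly independent linear forms `L₁, …, L_{d-1}` of `d-1` variables, the series
`∑_{n ∈ ℤ^{d-1}, n ≠ 0} 1/(|n| · ∏ (|L_k(n)|+1))` converges. -/
theorem series_convergence_linear_forms
    {d : ℕ} (hd : 2 ≤ d)
    (L : Fin (d - 1) → Fin (d - 1) → ℝ) (hLind : LinearIndependent ℝ L) :
    Summable (fun n : {n : Fin (d - 1) → ℤ // n ≠ 0} =>
      1 / (znorm n.1 * ∏ k, (|∑ i, L k i * (n.1 i : ℝ)| + 1))) := by
  have hm : 0 < d - 1 := by omega
  generalize d - 1 = m at *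
  obtain ⟨N, hN0, hN⟩ := exists_bound_of_linear_forms_lt_one hLind
  have : NeZero N := ⟨hN0.ne'⟩
  set p : ℝ := 1 + 1 / (m : ℝ) with hp_def
  have hp : 1 < p := by
    have : (0 : ℝ) < 1 / (m : ℝ) := by positivity
    linarith
  have hg : Summable (fun b : ℤ × ZMod N => ((1 + |(b.1 : ℝ)|) / 2) ^ (-p)) := by
    have hfin : Summable (fun _ : ZMod N => (1 : ℝ)) := (hasSum_fintype _).summable
    simpa using (summable_int_one_add_abs_div_two_rpow hp).mul_of_nonneg hfin
      (fun j => by positivity) (fun _ => zero_le_one)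
  have hsum := ((summable_prod_pi (ι := Fin m) (fun b => by positivity) hg).comp_injective
    ((floor_residue_injective hN).comp
      (Subtype.val_injective (p := fun n : Fin m → ℤ => n ≠ 0)))).mul_left
      (1 + ∑ k, ∑ i, |L k i|)
  refine Summable.of_nonneg_of_le (fun n => ?_) (fun n => ?_) hsum
  · have := one_le_znorm n.2
    positivity
  · refine (one_div_mul_prod_le hm (fun k => by linarith [abs_nonneg (∑ i, L k i * (n.1 i : ℝ))])
      (by positivity) (one_pos.trans_le (one_le_znorm n.2))
      (abs_linear_form_add_one_le L n.2)).trans ?_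
    refine mul_le_mul_of_nonneg_left ?_ (by positivity)
    refine Finset.prod_le_prod (fun k _ => by positivity) fun k _ => ?_
    exact Real.rpow_le_rpow_of_nonpos (by positivity) (one_add_abs_floor_div_two_le _)
      (by linarith)
end

section
/- Let α_1 be an irrational real number, and suppose there exists a constant η < 2 such that the inequality ‖n α_1‖ < |n|^{−η} has only finitely many integer solutions n ∈ ℤ, n ≠ 0. Then Σ_{n=1}^∞ 1/(n² ‖n α_1‖) < ∞. -/
open Real

/-- Distance from a real number to the nearest integer. -/
noncomputable def nint (x : ℝ) : ℝ := |x - round x|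

lemma nint_le_abs_sub_intCast (x : ℝ) (z : ℤ) : nint x ≤ |x - z| :=
  round_le x z

lemma nint_nonneg (x : ℝ) : 0 ≤ nint x :=
  abs_nonneg _

lemma nint_le_one (x : ℝ) : nint x ≤ 1 :=
  (abs_sub_round x).trans (by norm_num)

lemma nint_intCast_mul_pos {α : ℝ} (hα : Irrational α) {n : ℤ} (hn : n ≠ 0) :
    0 < nint ((n : ℝ) * α) :=
  abs_pos.2 (sub_ne_zero.2 ((hα.intCast_mul hn).ne_int _))

/-- A Diophantine inequality with finitely many exceptions holds without exception after
lowering the constant. -/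
lemma exists_pos_mul_rpow_le_nint {α η : ℝ} (hα : Irrational α)
    (hfin : {n : ℤ | nint ((n : ℝ) * α) < |(n : ℝ)| ^ (-η)}.Finite) :
    ∃ c : ℝ, 0 < c ∧ ∀ n : ℤ, n ≠ 0 → c * |(n : ℝ)| ^ (-η) ≤ nint ((n : ℝ) * α) := by
  set f : ℤ → ℝ := fun n => nint ((n : ℝ) * α) * |(n : ℝ)| ^ η with hf
  have abs_pos_of_ne {n : ℤ} (hn : n ≠ 0) : 0 < |(n : ℝ)| := by positivity
  obtain ⟨m, hm, hmin⟩ := (insert 1 (hfin.toFinset.erase 0)).exists_min_image f (by simp)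
  have hm0 : m ≠ 0 := by
    rintro rfl
    simp at hm
  have hfm : 0 < f m := mul_pos (nint_intCast_mul_pos hα hm0)
    (rpow_pos_of_pos (abs_pos_of_ne hm0) _)
  refine ⟨min 1 (f m), lt_min one_pos hfm, fun n hn => ?_⟩
  have hpos := rpow_pos_of_pos (abs_pos_of_ne hn) (-η)
  by_cases hnT : nint ((n : ℝ) * α) < |(n : ℝ)| ^ (-η)
  · have hle : f m ≤ f n := hmin n (by simp [hn, hnT])
    calc min 1 (f m) * |(n : ℝ)| ^ (-η) ≤ f n * |(n : ℝ)| ^ (-η) := by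
          gcongr
          exact (min_le_right _ _).trans hle
      _ = nint ((n : ℝ) * α) := by
          rw [hf, mul_assoc, ← rpow_add (abs_pos_of_ne hn)]
          simp
  · calc min 1 (f m) * |(n : ℝ)| ^ (-η) ≤ 1 * |(n : ℝ)| ^ (-η) := by
          gcongr
          exact min_le_left _ _
      _ ≤ nint ((n : ℝ) * α) := by simpa using hnT

/-- A sum of inverse powers over a `δ`-separated set of reals avoiding `(-δ, δ)`. -/
lemma sum_abs_rpow_neg_le_of_separated {ι : Type*} {δ p : ℝ} (hδ : 0 < δ) (hp : 1 < p)
    (s : Finset ι) (x : ι → ℝ) (hx : ∀ i ∈ s, δ ≤ |x i|)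
    (hsep : ∀ i ∈ s, ∀ j ∈ s, i ≠ j → δ ≤ |x i - x j|) :
    ∑ i ∈ s, |x i| ^ (-p) ≤ (3 / δ) ^ p * ∑' j : ℤ, (1 + |(j : ℝ)|) ^ (-p) := by
  have hsum : Summable fun j : ℤ => (1 + |(j : ℝ)|) ^ (-p) := by
    refine Summable.of_norm_bounded_eventually (summable_abs_int_rpow hp) ?_
    filter_upwards [(Set.finite_singleton (0 : ℤ)).compl_mem_cofinite] with j hj
    have hj : 0 < |(j : ℝ)| := by simpa using hj
    rw [norm_of_nonneg (by positivity)]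
    exact rpow_le_rpow_of_nonpos hj (by linarith) (by linarith)
  have hinj : Set.InjOn (fun i => ⌊x i / δ⌋) s := by
    intro i hi j hj hij
    by_contra hne
    have h := Int.abs_sub_lt_one_of_floor_eq_floor hij
    rw [← sub_div, abs_div, abs_of_pos hδ, div_lt_one hδ] at h
    exact (hsep i hi j hj hne).not_gt h
  have hterm : ∀ i ∈ s, |x i| ^ (-p) ≤ (3 / δ) ^ p * (1 + |(⌊x i / δ⌋ : ℝ)|) ^ (-p) := by
    intro i hi
    have hxi : 0 < |x i| := hδ.trans_le (hx i hi)
    have h1 : 1 ≤ |x i / δ| := by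
      rw [abs_div, abs_of_pos hδ, one_le_div hδ]
      exact hx i hi
    have h2 : |(⌊x i / δ⌋ : ℝ)| ≤ |x i / δ| + 1 := by
      have := Int.floor_le (x i / δ)
      have := Int.lt_floor_add_one (x i / δ)
      rw [abs_le]
      constructor <;> cases abs_cases (x i / δ) <;> linarith
    have h3 : 1 + |(⌊x i / δ⌋ : ℝ)| ≤ 3 / δ * |x i| := by
      calc 1 + |(⌊x i / δ⌋ : ℝ)| ≤ 3 * |x i / δ| := by linarith
        _ = 3 / δ * |x i| := by rw [abs_div, abs_of_pos hδ]; ring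
    calc |x i| ^ (-p) = (3 / δ) ^ p * (3 / δ * |x i|) ^ (-p) := by
          rw [mul_rpow (by positivity) hxi.le, ← mul_assoc, ← rpow_add (by positivity)]
          simp
      _ ≤ _ := by
          gcongr ?_ * ?_
          exact rpow_le_rpow_of_nonpos (by positivity) h3 (by linarith)
  calc ∑ i ∈ s, |x i| ^ (-p)
      ≤ (3 / δ) ^ p * ∑ i ∈ s, (1 + |(⌊x i / δ⌋ : ℝ)|) ^ (-p) := by
        rw [Finset.mul_sum]
        exact Finset.sum_le_sum hterm
    _ = (3 / δ) ^ p * ∑ j ∈ s.image fun i => ⌊x i / δ⌋, (1 + |(j : ℝ)|) ^ (-p) := by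
        rw [Finset.sum_image hinj]
    _ ≤ _ := by
        gcongr
        exact hsum.sum_le_tsum _ fun j _ => by positivity

/-- Polynomial growth of the partial sums of `1 / ‖nα‖` for Diophantine `α`. -/
lemma sum_inv_nint_le {α η c p : ℝ} (hη : 0 ≤ η) (hc : 0 < c) (hp : 1 < p)
    (h : ∀ n : ℤ, n ≠ 0 → c * |(n : ℝ)| ^ (-η) ≤ nint ((n : ℝ) * α)) (N : ℕ) :
    ∑ n ∈ Finset.Icc 1 N, (nint ((n : ℝ) * α))⁻¹ ≤
      (3 / c) ^ p * (∑' j : ℤ, (1 + |(j : ℝ)|) ^ (-p)) * (N : ℝ) ^ (p * η) := by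
  rcases N.eq_zero_or_pos with rfl | hN
  · simp only [zero_lt_one, Finset.Icc_eq_empty_of_lt, Finset.sum_empty]
    have : 0 ≤ ∑' j : ℤ, (1 + |(j : ℝ)|) ^ (-p) := tsum_nonneg fun j => by positivity
    positivity
  have hN' : (0 : ℝ) < N := by exact_mod_cast hN
  set δ := c * (N : ℝ) ^ (-η) with hδ_def
  have hδ : 0 < δ := by positivity
  have hlow : ∀ n : ℤ, n ≠ 0 → |n| ≤ N → δ ≤ nint ((n : ℝ) * α) := by
    intro n hn hnN
    refine le_trans ?_ (h n hn)
    have hn' : 0 < |(n : ℝ)| := by positivity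
    have hnN' : |(n : ℝ)| ≤ N := by exact_mod_cast hnN
    exact mul_le_mul_of_nonneg_left (rpow_le_rpow_of_nonpos hn' hnN' (by linarith)) hc.le
  have hx : ∀ n ∈ Finset.Icc 1 N, δ ≤ nint ((n : ℝ) * α) := by
    intro n hn
    rw [Finset.mem_Icc] at hn
    exact_mod_cast hlow n (by omega) (by rw [abs_le]; omega)
  have key := sum_abs_rpow_neg_le_of_separated hδ hp (Finset.Icc 1 N)
    (fun n : ℕ => (n : ℝ) * α - round ((n : ℝ) * α)) hx (by
      intro m hm n hn hmn
      rw [Finset.mem_Icc] at hm hn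
      refine (hlow (m - n) (by omega) (by rw [abs_le]; omega)).trans
        ((nint_le_abs_sub_intCast _ (round ((m : ℝ) * α) - round ((n : ℝ) * α))).trans_eq ?_)
      push_cast
      congr 1
      ring)
  calc ∑ n ∈ Finset.Icc 1 N, (nint ((n : ℝ) * α))⁻¹
      ≤ ∑ n ∈ Finset.Icc 1 N, nint ((n : ℝ) * α) ^ (-p) := by
        refine Finset.sum_le_sum fun n hn => ?_
        rw [← rpow_neg_one]
        exact rpow_le_rpow_of_exponent_ge (hδ.trans_le (hx n hn)) (nint_le_one _) (by linarith)
    _ ≤ (3 / δ) ^ p * ∑' j : ℤ, (1 + |(j : ℝ)|) ^ (-p) := key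
    _ = _ := by
        have : 3 / δ = 3 / c * (N : ℝ) ^ η := by
          rw [hδ_def, rpow_neg hN'.le]
          field_simp
        rw [this, mul_rpow (by positivity) (by positivity), ← rpow_mul hN'.le, mul_comm η p]
        ring

/-- If there is `η < 2` such that `‖nα₁‖ < |n|^{-η}` has only finitely many integer
solutions, then `∑_{n=1}^∞ 1/(n²‖nα₁‖) < ∞`. -/
theorem summable_inv_sq_mul_nint
    (α₁ : ℝ) (hirr : Irrational α₁) (η : ℝ) (hη : η < 2)
    (hfin : {n : ℤ | nint ((n : ℝ) * α₁) < |(n : ℝ)| ^ (-η)}.Finite) :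
    Summable (fun n : ℕ+ => 1 / ((n : ℝ) ^ 2 * nint ((n : ℝ) * α₁))) := by
  obtain ⟨c, hc, hcn⟩ := exists_pos_mul_rpow_le_nint hirr hfin
  set θ := max η 1
  have hθ1 : 1 ≤ θ := le_max_right _ _
  have hθ2 : θ < 2 := max_lt hη one_lt_two
  have hθn : ∀ n : ℤ, n ≠ 0 → c * |(n : ℝ)| ^ (-θ) ≤ nint ((n : ℝ) * α₁) := by
    intro n hn
    refine le_trans ?_ (hcn n hn)
    have h1 : 1 ≤ |(n : ℝ)| := by exact_mod_cast Int.one_le_abs hn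
    gcongr
    exact le_max_left _ _
  set p := (θ + 2) / (2 * θ) with hp_def
  have hp : 1 < p := by
    rw [hp_def, one_lt_div (by positivity)]
    linarith
  have hpθ : p * θ = (θ + 2) / 2 := by
    rw [hp_def]
    field_simp
  have hO : (fun N : ℕ => ∑ n ∈ Finset.Icc 1 N, ‖(((nint ((n : ℝ) * α₁))⁻¹ : ℝ) : ℂ)‖)
      =O[Filter.atTop] fun N : ℕ => (N : ℝ) ^ (p * θ) := by
    refine Asymptotics.IsBigO.of_bound
      ((3 / c) ^ p * ∑' j : ℤ, (1 + |(j : ℝ)|) ^ (-p)) (Filter.Eventually.of_forall fun N => ?_)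
    have hnn (n : ℕ) : 0 ≤ (nint ((n : ℝ) * α₁))⁻¹ := inv_nonneg.2 (nint_nonneg _)
    simp only [Complex.norm_real, norm_of_nonneg (hnn _)]
    rw [norm_of_nonneg (Finset.sum_nonneg fun n _ => hnn n), norm_of_nonneg (by positivity)]
    exact sum_inv_nint_le (by linarith) hc hp hθn N
  have hL := LSeriesSummable_of_sum_norm_bigO hO (by positivity) (s := 2)
    (by rw [hpθ]; norm_num; linarith)
  refine (hL.norm.comp_injective PNat.coe_injective).congr fun n => ?_
  simp [LSeries.term_def, div_eq_mul_inv, mul_comm, nint_nonneg]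
end
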